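/- Under the assumption that μ_i ≠ 0 for every i = 0,…,N−1, the determinant of A equals the product of the pivots: det(A) = ∏_{i=0}^{N−1} μ_i. -/

import Mathlib

/-!
The recursion computes an LU factorisation without pivoting. Let `L = Lmat A δ ξ μ` be the lower
triangular band matrix with diagonal `μ`, and `U = Umat N α β γ` the unit upper triangular band
matrix. Comparing the seven bands of `L * U` with those of `A` gives exactly the defining
equations of `δ, ξ, μ, α, β, γ`, where the three equations defined by a division by `μ i` need
`μ i ≠ 0`; hence `L * U = A` (`Lmat_mul_Umat`). Both factors are triangular, so
`det A = det L * det U = ∏ μ i`.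
-/

open Matrix Finset

/-- The `(i, j)` entry of the `N × N` matrix `A`, at integer indices,
with the convention that out-of-range entries are `0`. -/
def ent {K : Type*} [Field K] {N : ℕ} (A : Matrix (Fin N) (Fin N) K) (i j : ℤ) : K :=
  if h : 0 ≤ i ∧ i < (N : ℤ) ∧ 0 ≤ j ∧ j < (N : ℤ) then
    A ⟨i.toNat, by omega⟩ ⟨j.toNat, by omega⟩
  else 0

/-- The value of a vector `y ∈ K^N` at an integer index, with the convention
that out-of-range values are `0`. -/
def vent {K : Type*} [Field K] {N : ℕ} (y : Fin N → K) (i : ℤ) : K :=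
  if h : 0 ≤ i ∧ i < (N : ℤ) then y ⟨i.toNat, by omega⟩ else 0

/-- `A` is heptadiagonal: entries vanish at distance `> 3` from the diagonal. -/
def Heptadiagonal {K : Type*} [Field K] {N : ℕ} (A : Matrix (Fin N) (Fin N) K) : Prop :=
  ∀ i j : Fin N, 3 < |(i : ℤ) - (j : ℤ)| → A i j = 0

/-- The sequences `δ, ξ, μ, α, β, γ` of the symbolic algorithm for a heptadiagonal
matrix `A`, written with the subdiagonals `a*_i = A i (i-1)`, `b*_i = A i (i-2)`,
`c*_i = A i (i-3)`, the diagonal `d_i = A i i` and the superdiagonals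
`a_i = A i (i+1)`, `b_i = A i (i+2)`, `c_i = A i (i+3)`.  All terms with negative
index are `0`. -/
def AlgSeqs {K : Type*} [Field K] {N : ℕ} (A : Matrix (Fin N) (Fin N) K)
    (δ ξ μ α β γ : ℤ → K) : Prop :=
  (∀ i : ℤ, i < 0 → δ i = 0 ∧ ξ i = 0 ∧ μ i = 0 ∧ α i = 0 ∧ β i = 0 ∧ γ i = 0) ∧
  (∀ i : ℤ, 0 ≤ i → i < (N : ℤ) →
    δ i = ent A i (i - 1) - α (i - 2) * ent A i (i - 2)
        - ent A i (i - 3) * (β (i - 3) - α (i - 3) * α (i - 2)) ∧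
    ξ i = ent A i (i - 2) - α (i - 3) * ent A i (i - 3) ∧
    μ i = ent A i i - α (i - 1) * δ i - β (i - 2) * ξ i - γ (i - 3) * ent A i (i - 3) ∧
    α i = (ent A i (i + 1) - β (i - 1) * δ i - γ (i - 2) * ξ i) / μ i ∧
    β i = (ent A i (i + 2) - γ (i - 1) * δ i) / μ i ∧
    γ i = ent A i (i + 3) / μ i)

/-- The `k`-th leading principal minor of `A` : the determinant of the
`(k+1) × (k+1)` top-left submatrix. -/
def lpm {K : Type*} [Field K] {N : ℕ} (A : Matrix (Fin N) (Fin N) K) (k : ℕ)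
    (hk : k + 1 ≤ N) : K :=
  (A.submatrix (Fin.castLE hk) (Fin.castLE hk)).det

/-- The `k`-th leading principal minor of `A`, defined as `0` out of range. -/
def lpm' {K : Type*} [Field K] {N : ℕ} (A : Matrix (Fin N) (Fin N) K) (k : ℕ) : K :=
  if h : k + 1 ≤ N then lpm A k h else 0

/-- The lower triangular band factor `L` of the algorithm:
`L i i = μ i`, `L i (i-1) = δ i`, `L i (i-2) = ξ i`, `L i (i-3) = c*_i`. -/
def Lmat {K : Type*} [Field K] {N : ℕ} (A : Matrix (Fin N) (Fin N) K)
    (δ ξ μ : ℤ → K) : Matrix (Fin N) (Fin N) K :=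
  Matrix.of fun i j : Fin N =>
    if (i : ℤ) = (j : ℤ) then μ (i : ℤ)
    else if (i : ℤ) = (j : ℤ) + 1 then δ (i : ℤ)
    else if (i : ℤ) = (j : ℤ) + 2 then ξ (i : ℤ)
    else if (i : ℤ) = (j : ℤ) + 3 then ent A (i : ℤ) ((i : ℤ) - 3)
    else 0

/-- The unit upper triangular band factor `U` of the algorithm:
`U i i = 1`, `U i (i+1) = α i`, `U i (i+2) = β i`, `U i (i+3) = γ i`. -/
def Umat {K : Type*} [Field K] (N : ℕ) (α β γ : ℤ → K) : Matrix (Fin N) (Fin N) K :=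
  Matrix.of fun i j : Fin N =>
    if (j : ℤ) = (i : ℤ) then 1
    else if (j : ℤ) = (i : ℤ) + 1 then α (i : ℤ)
    else if (j : ℤ) = (i : ℤ) + 2 then β (i : ℤ)
    else if (j : ℤ) = (i : ℤ) + 3 then γ (i : ℤ)
    else 0

/-- The entries of `Umat` as a function of two integer indices. -/
def bandU {K : Type*} [Field K] (α β γ : ℤ → K) (k j : ℤ) : K :=
  if j = k then 1
  else if j = k + 1 then α k
  else if j = k + 2 then β k
  else if j = k + 3 then γ k
  else 0

lemma bandU_zero {K : Type*} [Field K] (α β γ : ℤ → K) {k j : ℤ} (h : j = k) :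
    bandU α β γ k j = 1 := by
  simp [bandU, h]

lemma bandU_one {K : Type*} [Field K] (α β γ : ℤ → K) {k j : ℤ} (h : j = k + 1) :
    bandU α β γ k j = α k := by
  simp [bandU, h]

lemma bandU_two {K : Type*} [Field K] (α β γ : ℤ → K) {k j : ℤ} (h : j = k + 2) :
    bandU α β γ k j = β k := by
  simp [bandU, h]

lemma bandU_three {K : Type*} [Field K] (α β γ : ℤ → K) {k j : ℤ} (h : j = k + 3) :
    bandU α β γ k j = γ k := by
  simp [bandU, h]

lemma bandU_far {K : Type*} [Field K] (α β γ : ℤ → K) {k j : ℤ} (h : j < k ∨ k + 3 < j) :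
    bandU α β γ k j = 0 := by
  unfold bandU
  rw [if_neg (by omega), if_neg (by omega), if_neg (by omega), if_neg (by omega)]

/-- A sum over `Fin N` picking out the integer index `m < N`. The index `m` may be negative,
in which case no summand is selected and `f m` has to vanish. -/
lemma sum_ite_int_eq {K : Type*} [Field K] {N : ℕ} (f : ℤ → K) (c : K) (m : ℤ)
    (hm : m < N) (hneg : m < 0 → f m = 0) :
    ∑ k : Fin N, (if (k : ℤ) = m then c else 0) * f (k : ℤ) = c * f m := by
  by_cases h0 : m < 0
  · rw [hneg h0, mul_zero]
    refine Finset.sum_eq_zero fun k _ => ?_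
    rw [if_neg (by omega), zero_mul]
  · lift m to ℕ using by omega
    rw [Finset.sum_eq_single (⟨m, by omega⟩ : Fin N)]
    · simp
    · intro k _ hk
      have : (k : ℤ) ≠ m := fun h => hk (Fin.ext (by simpa using h))
      rw [if_neg this, zero_mul]
    · simp

lemma ent_coe {K : Type*} [Field K] {N : ℕ} (A : Matrix (Fin N) (Fin N) K) (i j : Fin N) :
    ent A i j = A i j := by
  simp [ent]

/-- Row `i` of `L` has its nonzero entries in the columns `i, i - 1, i - 2, i - 3` only. -/
lemma Lmat_mul_Umat_apply {K : Type*} [Field K] {N : ℕ} (A : Matrix (Fin N) (Fin N) K)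
    (δ ξ μ α β γ : ℤ → K) (hneg : ∀ i : ℤ, i < 0 → α i = 0 ∧ β i = 0 ∧ γ i = 0)
    (i j : Fin N) :
    (Lmat A δ ξ μ * Umat N α β γ) i j =
      μ i * bandU α β γ i j + δ i * bandU α β γ ((i : ℤ) - 1) j
        + ξ i * bandU α β γ ((i : ℤ) - 2) j
        + ent A i ((i : ℤ) - 3) * bandU α β γ ((i : ℤ) - 3) j := by
  have hU : ∀ m : ℤ, m < 0 → bandU α β γ m j = 0 := by
    intro m hm
    obtain ⟨h1, h2, h3⟩ := hneg m hm
    have : (j : ℤ) ≠ m := by omega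
    simp [bandU, this, h1, h2, h3]
  rw [← sum_ite_int_eq (N := N) (fun k => bandU α β γ k j) (μ i) i (by omega) (hU _),
    ← sum_ite_int_eq (N := N) (fun k => bandU α β γ k j) (δ i) (i - 1) (by omega) (hU _),
    ← sum_ite_int_eq (N := N) (fun k => bandU α β γ k j) (ξ i) (i - 2) (by omega) (hU _),
    ← sum_ite_int_eq (N := N) (fun k => bandU α β γ k j) (ent A i ((i : ℤ) - 3)) (i - 3)
      (by omega) (hU _),
    Matrix.mul_apply, ← Finset.sum_add_distrib, ← Finset.sum_add_distrib,
    ← Finset.sum_add_distrib]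
  refine Finset.sum_congr rfl fun k _ => ?_
  rw [← add_mul, ← add_mul, ← add_mul]
  congr 1
  simp only [Lmat, Matrix.of_apply]
  split_ifs <;> first | omega | simp

/-- The recursion is exactly the band-by-band comparison of `A` with `L * U`. -/
lemma Lmat_mul_Umat {K : Type*} [Field K] {N : ℕ}
    (A : Matrix (Fin N) (Fin N) K) (hA : Heptadiagonal A)
    (δ ξ μ α β γ : ℤ → K) (hseq : AlgSeqs A δ ξ μ α β γ)
    (hμ : ∀ i : ℤ, 0 ≤ i → i < (N : ℤ) → μ i ≠ 0) :
    Lmat A δ ξ μ * Umat N α β γ = A := by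
  obtain ⟨hneg, hrec⟩ := hseq
  ext i j
  rw [Lmat_mul_Umat_apply A δ ξ μ α β γ (fun m hm => (hneg m hm).2.2.2)]
  have hi := hμ i (by omega) (by omega)
  obtain ⟨hδ, hξ, hm, hα, hβ, hγ⟩ := hrec i (by omega) (by omega)
  rw [eq_div_iff hi] at hα hβ hγ
  by_cases hband : 3 < |(i : ℤ) - (j : ℤ)|
  · rw [hA i j hband]
    rw [lt_abs] at hband
    rw [bandU_far _ _ _ (by omega), bandU_far _ _ _ (by omega), bandU_far _ _ _ (by omega),
      bandU_far _ _ _ (by omega)]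
    ring
  · rw [not_lt, abs_le] at hband
    have hij : (j : ℤ) = i - 3 ∨ (j : ℤ) = i - 2 ∨ (j : ℤ) = i - 1 ∨ (j : ℤ) = i ∨
        (j : ℤ) = i + 1 ∨ (j : ℤ) = i + 2 ∨ (j : ℤ) = i + 3 := by omega
    rw [← ent_coe A i j]
    rcases hij with h | h | h | h | h | h | h
    · rw [bandU_far _ _ _ (by omega), bandU_far _ _ _ (by omega),
        bandU_far _ _ _ (by omega), bandU_zero _ _ _ (by omega), h]
      ring
    · rw [bandU_far _ _ _ (by omega), bandU_far _ _ _ (by omega),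
        bandU_zero _ _ _ (by omega), bandU_one _ _ _ (by omega), h]
      linear_combination hξ
    · rw [bandU_far _ _ _ (by omega), bandU_zero _ _ _ (by omega),
        bandU_one _ _ _ (by omega), bandU_two _ _ _ (by omega), h]
      linear_combination hδ + α ((i : ℤ) - 2) * hξ
    · rw [bandU_zero _ _ _ (by omega), bandU_one _ _ _ (by omega),
        bandU_two _ _ _ (by omega), bandU_three _ _ _ (by omega), h]
      linear_combination hm
    · rw [bandU_one _ _ _ (by omega), bandU_two _ _ _ (by omega),
        bandU_three _ _ _ (by omega), bandU_far _ _ _ (by omega), h]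
      linear_combination hα
    · rw [bandU_two _ _ _ (by omega), bandU_three _ _ _ (by omega),
        bandU_far _ _ _ (by omega), bandU_far _ _ _ (by omega), h]
      linear_combination hβ
    · rw [bandU_three _ _ _ (by omega), bandU_far _ _ _ (by omega),
        bandU_far _ _ _ (by omega), bandU_far _ _ _ (by omega), h]
      linear_combination hγ

lemma det_Lmat {K : Type*} [Field K] {N : ℕ} (A : Matrix (Fin N) (Fin N) K)
    (δ ξ μ : ℤ → K) : (Lmat A δ ξ μ).det = ∏ i ∈ Finset.range N, μ (i : ℤ) := by
  rw [Matrix.det_of_isLowerTriangular, ← Fin.prod_univ_eq_prod_range (fun i : ℕ => μ (i : ℤ))]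
  · simp [Lmat]
  · intro i j hij
    have hlt : i < j := hij
    simp only [Lmat, Matrix.of_apply]
    split_ifs <;> first | omega | rfl

lemma det_Umat {K : Type*} [Field K] (N : ℕ) (α β γ : ℤ → K) :
    (Umat N α β γ).det = 1 := by
  rw [Matrix.det_of_isUpperTriangular]
  · simp [Umat]
  · intro i j hij
    have hlt : j < i := hij
    simp only [Umat, Matrix.of_apply]
    split_ifs <;> first | omega | rfl

/-- if all pivots `μ i` are nonzero, then `det A = ∏ μ i`. -/
theorem heptadiagonal_det_eq_prod_pivots {K : Type*} [Field K] {N : ℕ} (hN : 1 ≤ N)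
    (A : Matrix (Fin N) (Fin N) K) (hA : Heptadiagonal A)
    (δ ξ μ α β γ : ℤ → K) (hseq : AlgSeqs A δ ξ μ α β γ)
    (hμ : ∀ i : ℤ, 0 ≤ i → i < (N : ℤ) → μ i ≠ 0) :
    A.det = ∏ i ∈ Finset.range N, μ (i : ℤ) := by
  rw [← Lmat_mul_Umat A hA δ ξ μ α β γ hseq hμ, Matrix.det_mul, det_Lmat, det_Umat, mul_one]
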